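/- arXiv:2311.17849 — 2 statements merged into one kernel-verified Lean document; each statement's English description precedes it below -/
import Mathlib

section
/- Let A = (Q, Σ, δ) be a synchronizing complete DFA, let C ⊆ Q be a strongly connected component of the underlying digraph of A that is a sink, and let R ⊆ C × C. Let G_C be the digraph with vertex set C and edge set {(q, δ(q, a)) : q ∈ C, a ∈ Σ} (all these edges stay inside C since C is a sink). Then there exists a word w ∈ Σ* that synchronizes A and satisfies R ⊆ ℛ^{ℓ<ℓ}_p(w) if and only if G_C contains a path satisfying the Last-Visits conditions for R. -/
/-- The path `ρ 0, …, ρ k` satisfies the Last-Visits conditions for `R`. -/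
def LastVisits {V : Type*} (R : Set (V × V)) (k : ℕ) (ρ : ℕ → V) : Prop :=
  ∀ p ∈ R, (∃ j ≤ k, ρ j = p.2) ∧ ∀ i ≤ k, ρ i = p.1 → ∃ j ≤ k, i < j ∧ ρ j = p.2

/-- Extension of the transition function `δ` to words. -/
def dStar {Q A : Type*} (δ : Q → A → Q) (q : Q) (w : List A) : Q :=
  w.foldl δ q

/-- A word `w` synchronizes the complete DFA with transition function `δ`:
it maps every state to one particular state. -/
def Synchronizes {Q A : Type*} (δ : Q → A → Q) (w : List A) : Prop :=
  ∃ q0 : Q, ∀ q : Q, dStar δ q w = q0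

/-- `last(p, w, {r})`: the largest `i ≤ |w|` such that the path labeled by `w`
starting at `r` visits `p` at position `i`, or `⊥ = -∞` if there is none. -/
def lastVisit {Q A : Type*} [DecidableEq Q] (δ : Q → A → Q) (w : List A)
    (r p : Q) : WithBot ℕ :=
  ((Finset.range (w.length + 1)).filter (fun i => dStar δ r (w.take i) = p)).max

/-- The traversal relation `ℛ^{ℓ<ℓ}_p(w)` ("ℓ < ℓ on paths"). -/
def RelLtLtPaths {Q A : Type*} [DecidableEq Q] (δ : Q → A → Q) (w : List A) :
    Set (Q × Q) :=
  {pq | pq.1 ≠ pq.2 ∧ ∀ r : Q, lastVisit δ w r pq.1 < lastVisit δ w r pq.2}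


/-- The edge relation of the underlying digraph of the DFA `δ`. -/
def UEdge {Q A : Type*} (δ : Q → A → Q) (u v : Q) : Prop :=
  ∃ a : A, δ u a = v

/-!
A reset word followed by a word `x` forces every trajectory to end with one and the same path, the
one labelled by `x`. The Last-Visits conditions hold for a path as soon as they hold for a suffix of
it, because a visit that happens before the suffix is followed by every visit inside the suffix. In
a synchronizing automaton each state of the sink component is the value of some reset word, so a
path in the component can be made the common suffix of all trajectories. Conversely, the trajectory
of any state of the sink component stays inside the component.
-/

open Relation

section LastVisits

variable {V : Type*} {R : Set (V × V)}

theorem LastVisits.congr {k : ℕ} {ρ σ : ℕ → V} (h : LastVisits R k ρ)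
    (hσ : ∀ i ≤ k, σ i = ρ i) : LastVisits R k σ := by
  intro p hp
  obtain ⟨⟨j, hj, hjp⟩, hlater⟩ := h p hp
  refine ⟨⟨j, hj, (hσ j hj).trans hjp⟩, fun i hi hip => ?_⟩
  obtain ⟨l, hl, hil, hlp⟩ := hlater i hi ((hσ i hi).symm.trans hip)
  exact ⟨l, hl, hil, (hσ l hl).trans hlp⟩

theorem LastVisits.of_suffix {m k : ℕ} {σ : ℕ → V}
    (h : LastVisits R k fun i => σ (m + i)) : LastVisits R (m + k) σ := by
  intro p hp
  obtain ⟨⟨j, hj, hjp⟩, hlater⟩ := h p hp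
  refine ⟨⟨m + j, by lia, hjp⟩, fun i hi hip => ?_⟩
  rcases Nat.lt_or_ge i m with him | hmi
  · exact ⟨m + j, by lia, by lia, hjp⟩
  · obtain ⟨i, rfl⟩ := Nat.exists_eq_add_of_le hmi
    obtain ⟨l, hl, hil, hlp⟩ := hlater i (by lia) hip
    exact ⟨m + l, by lia, by lia, hlp⟩

end LastVisits

section Words

variable {Q A : Type*} {δ : Q → A → Q}

theorem dStar_append (q : Q) (u v : List A) :
    dStar δ q (u ++ v) = dStar δ (dStar δ q u) v :=
  List.foldl_append

theorem reflTransGen_uEdge_dStar (q : Q) (w : List A) :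
    ReflTransGen (UEdge δ) q (dStar δ q w) := by
  induction w generalizing q with
  | nil => exact .refl
  | cons a w ih => exact .head ⟨a, rfl⟩ (ih (δ q a))

theorem exists_dStar_eq_of_reflTransGen_uEdge {p q : Q} (h : ReflTransGen (UEdge δ) p q) :
    ∃ u : List A, dStar δ p u = q := by
  induction h with
  | refl => exact ⟨[], rfl⟩
  | tail _ e ih =>
    obtain ⟨u, rfl⟩ := ih
    obtain ⟨a, rfl⟩ := e
    exact ⟨u ++ [a], dStar_append p u [a]⟩

/-- The path labelled by `w` that starts at `r`, as a sequence of states. It is constant from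
position `w.length` on. -/
def trajectory (δ : Q → A → Q) (w : List A) (r : Q) (i : ℕ) : Q :=
  dStar δ r (w.take i)

theorem uEdge_trajectory {w : List A} {i : ℕ} (hi : i < w.length) (r : Q) :
    UEdge δ (trajectory δ w r i) (trajectory δ w r (i + 1)) :=
  ⟨w[i], by simp only [trajectory, List.take_succ_eq_append_getElem hi, dStar_append]; rfl⟩

theorem trajectory_append_left {u : List A} {i : ℕ} (hi : i ≤ u.length) (v : List A) (r : Q) :
    trajectory δ (u ++ v) r i = trajectory δ u r i := by
  rw [trajectory, List.take_append_of_le_length hi, trajectory]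

theorem trajectory_append_right (u v : List A) (r : Q) (i : ℕ) :
    trajectory δ (u ++ v) r (u.length + i) = trajectory δ v (dStar δ r u) i := by
  rw [trajectory, List.take_length_add_append, dStar_append, trajectory]

theorem exists_trajectory_eq_of_path {ρ : ℕ → Q} {k : ℕ}
    (h : ∀ i < k, UEdge δ (ρ i) (ρ (i + 1))) :
    ∃ x : List A, x.length = k ∧ ∀ i ≤ k, trajectory δ x (ρ 0) i = ρ i := by
  induction k with
  | zero => exact ⟨[], rfl, fun i hi => by rw [Nat.le_zero.mp hi]; rfl⟩
  | succ k ih =>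
    obtain ⟨x, rfl, hx⟩ := ih fun i hi => h i (hi.trans k.lt_succ_self)
    obtain ⟨a, ha⟩ := h x.length x.length.lt_succ_self
    have hend : dStar δ (ρ 0) x = ρ x.length := by
      simpa only [trajectory, List.take_length] using hx x.length le_rfl
    refine ⟨x ++ [a], List.length_append, fun i hi => ?_⟩
    rcases Nat.le_or_eq_of_le_succ hi with hi | rfl
    · rw [trajectory_append_left hi, hx i hi]
    · calc trajectory δ (x ++ [a]) (ρ 0) (x.length + 1)
          = trajectory δ [a] (dStar δ (ρ 0) x) 1 := trajectory_append_right x [a] (ρ 0) 1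
        _ = δ (ρ x.length) a := by rw [hend]; rfl
        _ = ρ (x.length + 1) := ha

theorem LastVisits.trajectory_append {R : Set (Q × Q)} {u v : List A} {r : Q}
    (h : LastVisits R v.length (trajectory δ v (dStar δ r u))) :
    LastVisits R (u ++ v).length (trajectory δ (u ++ v) r) := by
  rw [List.length_append]
  exact .of_suffix (h.congr fun i _ => trajectory_append_right u v r i)

end Words

section Synchronization

variable {Q A : Type*} {δ : Q → A → Q} {w : List A}

theorem Synchronizes.append (h : Synchronizes δ w) (v : List A) : Synchronizes δ (w ++ v) := by
  obtain ⟨s, hs⟩ := h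
  exact ⟨dStar δ s v, fun q => by rw [dStar_append, hs]⟩

theorem Synchronizes.reflTransGen_of_recurrent (h : Synchronizes δ w) {q₀ : Q}
    (hq₀ : ∀ q, ReflTransGen (UEdge δ) q₀ q → ReflTransGen (UEdge δ) q q₀) (q : Q) :
    ReflTransGen (UEdge δ) q q₀ := by
  obtain ⟨s, hs⟩ := h
  have hreach (r : Q) : ReflTransGen (UEdge δ) r s := hs r ▸ reflTransGen_uEdge_dStar r w
  exact (hreach q).trans (hq₀ s (hreach q₀))

theorem Synchronizes.exists_forall_dStar_eq (h : Synchronizes δ w) {p : Q}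
    (hp : ∀ q, ReflTransGen (UEdge δ) q p) :
    ∃ y : List A, ∀ q, dStar δ q y = p := by
  obtain ⟨s, hs⟩ := h
  obtain ⟨u, hu⟩ := exists_dStar_eq_of_reflTransGen_uEdge (hp s)
  exact ⟨w ++ u, fun q => by rw [dStar_append, hs, hu]⟩

end Synchronization

section TraversalRelation

theorem finset_max_lt_max_iff {α : Type*} [LinearOrder α] {S T : Finset α} :
    S.max < T.max ↔ T.Nonempty ∧ ∀ i ∈ S, ∃ j ∈ T, i < j := by
  rcases T.eq_empty_or_nonempty with rfl | hT
  · simp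
  · have hbot : ⊥ < T.max := bot_lt_iff_ne_bot.mpr (Finset.max_eq_bot.not.mpr hT.ne_empty)
    rw [Finset.max, Finset.sup_lt_iff hbot]
    simp [Finset.max, Finset.lt_sup_iff, hT]

variable {Q A : Type*} [DecidableEq Q] {δ : Q → A → Q} {w : List A} {R : Set (Q × Q)}

theorem forall_lastVisit_lt_iff_lastVisits_trajectory {r : Q} :
    (∀ p ∈ R, lastVisit δ w r p.1 < lastVisit δ w r p.2) ↔
      LastVisits R w.length (trajectory δ w r) := by
  simp only [lastVisit, finset_max_lt_max_iff, LastVisits, trajectory, Finset.Nonempty,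
    Finset.mem_filter, Finset.mem_range, Nat.lt_succ_iff, and_imp, and_left_comm, and_comm]

theorem subset_relLtLtPaths_iff [Nonempty Q] :
    R ⊆ RelLtLtPaths δ w ↔ ∀ r, LastVisits R w.length (trajectory δ w r) := by
  simp only [← forall_lastVisit_lt_iff_lastVisits_trajectory]
  refine ⟨fun h r p hp => (h hp).2 r, fun h p hp => ⟨fun heq => ?_, fun r => h r p hp⟩⟩
  obtain ⟨r⟩ := ‹Nonempty Q›
  exact (h r p hp).ne (congrArg (lastVisit δ w r) heq)

end TraversalRelation

theorem constrainedSync_iff_lastVisitsTraversal_on_sink_general {Q A : Type*}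
    [DecidableEq Q]
    (δ : Q → A → Q)
    (hsync : ∃ w : List A, Synchronizes δ w)
    (C : Set Q)
    (hSCC : ∃ q0 : Q, C = {q | Relation.ReflTransGen (UEdge δ) q0 q ∧
                               Relation.ReflTransGen (UEdge δ) q q0})
    (hsink : ∀ p ∈ C, ∀ q : Q, Relation.ReflTransGen (UEdge δ) p q → q ∈ C)
    (R : Set (Q × Q)) :
    (∃ w : List A, Synchronizes δ w ∧ R ⊆ RelLtLtPaths δ w) ↔
    (∃ (k : ℕ) (ρ : ℕ → Q), (∀ i ≤ k, ρ i ∈ C) ∧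
      (∀ i < k, UEdge δ (ρ i) (ρ (i + 1))) ∧ LastVisits R k ρ) := by
  obtain ⟨q₀, rfl⟩ := hSCC
  have : Nonempty Q := ⟨q₀⟩
  simp only [subset_relLtLtPaths_iff]
  constructor
  · rintro ⟨w, -, hw⟩
    exact ⟨w.length, trajectory δ w q₀,
      fun i _ => hsink q₀ ⟨.refl, .refl⟩ _ (reflTransGen_uEdge_dStar q₀ (w.take i)),
      fun i hi => uEdge_trajectory hi q₀, hw q₀⟩
  · rintro ⟨k, ρ, hρC, hρ, hLV⟩
    obtain ⟨w, hw⟩ := hsync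
    have hreach (q : Q) : ReflTransGen (UEdge δ) q (ρ 0) :=
      (hw.reflTransGen_of_recurrent (fun r hr => (hsink q₀ ⟨.refl, .refl⟩ r hr).2) q).trans
        (hρC 0 k.zero_le).1
    obtain ⟨y, hy⟩ := hw.exists_forall_dStar_eq hreach
    obtain ⟨x, rfl, hx⟩ := exists_trajectory_eq_of_path hρ
    refine ⟨y ++ x, Synchronizes.append ⟨ρ 0, hy⟩ x, fun r => LastVisits.trajectory_append ?_⟩
    rw [hy r]
    exact hLV.congr hx

theorem constrainedSync_iff_lastVisitsTraversal_on_sink {Q A : Type*}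
    [Fintype Q] [DecidableEq Q]
    (δ : Q → A → Q)
    (hsync : ∃ w : List A, Synchronizes δ w)
    (C : Set Q)
    (hSCC : ∃ q0 : Q, C = {q | Relation.ReflTransGen (UEdge δ) q0 q ∧
                               Relation.ReflTransGen (UEdge δ) q q0})
    (hsink : ∀ p ∈ C, ∀ q : Q, Relation.ReflTransGen (UEdge δ) p q → q ∈ C)
    (R : Set (Q × Q)) (hR : ∀ p ∈ R, p.1 ∈ C ∧ p.2 ∈ C) :
    (∃ w : List A, Synchronizes δ w ∧ R ⊆ RelLtLtPaths δ w) ↔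
    (∃ (k : ℕ) (ρ : ℕ → Q), (∀ i ≤ k, ρ i ∈ C) ∧
      (∀ i < k, UEdge δ (ρ i) (ρ (i + 1))) ∧ LastVisits R k ρ) :=
  constrainedSync_iff_lastVisitsTraversal_on_sink_general δ hsync C hSCC hsink R
end

section
/- Let A = (Q, Σ, δ) be a partial DFA with |Q| ≥ 2 and fix a state t ∈ Q. Let q⊖, r be fresh states and, for every q ∈ Q ∪ {r}, let q̂ be a further fresh state (all added states pairwise distinct and not in Q). Define the complete DFA A'' over the state set Q'' = Q ∪ {q⊖, r} ∪ {q̂ : q ∈ Q ∪ {r}} by: δ''(q, a) = δ(q, a) for q ∈ Q, a ∈ Σ whenever δ(q, a) is defined; δ''(q, a) = q⊖ for q ∈ Q, a ∈ Σ whenever δ(q, a) is undefined; δ''(q⊖, a) = δ''(r, a) = δ''(t, a) for every a ∈ Σ (that is, both equal δ(t, a) if it is defined and q⊖ otherwise); and δ''(q̂, a) = q for every q ∈ Q ∪ {r} and every a ∈ Σ. Then A admits a carefully synchronizing word if and only if there exists a word w ∈ Σ* that synchronizes A'' and satisfies (q⊖, r) ∈ ℛ^{ℓ<ℓ}(w)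 with respect to A''. -/
/-- Extension of the partial transition function `δ` to words. -/
def pStar {Q A : Type*} (δ : Q → A → Option Q) (q : Q) (w : List A) : Option Q :=
  w.foldl (fun o a => o.bind fun p => δ p a) (some q)

/-- A word `w` carefully synchronizes the partial DFA `δ`. -/
def CarefullySync {Q A : Type*} (δ : Q → A → Option Q) (w : List A) : Prop :=
  ∃ q0 : Q, ∀ q : Q, pStar δ q w = some q0

/-- `last(p, w, Q)`: the largest `i ≤ |w|` with `p ∈ δ(Q, w[1..i])`,
or `⊥ = -∞` if there is none. -/
def lastVisitSet {Q A : Type*} [Fintype Q] [DecidableEq Q] (δ : Q → A → Q)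
    (w : List A) (p : Q) : WithBot ℕ :=
  ((Finset.range (w.length + 1)).filter
    (fun i => ∃ q : Q, dStar δ q (w.take i) = p)).max

/-- The traversal relation `ℛ^{ℓ<ℓ}(w)` ("ℓ < ℓ on sets"). -/
def RelLtLtSets {Q A : Type*} [Fintype Q] [DecidableEq Q] (δ : Q → A → Q)
    (w : List A) : Set (Q × Q) :=
  {pq | pq.1 ≠ pq.2 ∧ lastVisitSet δ w pq.1 < lastVisitSet δ w pq.2}

/-- The completion of the partial DFA `δ` (as for `ℛ^{ℓ≤ℓ}`): states are
`Q ⊕ Bool`, where `Sum.inr false` is `q⊖` and `Sum.inr true` is `r`. -/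
def extDelta {Q A : Type*} (δ : Q → A → Option Q) (t : Q) :
    Q ⊕ Bool → A → Q ⊕ Bool :=
  fun s a =>
    match s with
    | Sum.inl q => (δ q a).elim (Sum.inr false) Sum.inl
    | Sum.inr _ => (δ t a).elim (Sum.inr false) Sum.inl

/-- The DFA `A''`: in addition to the states of `A'` (embedded via
`Sum.inl`), for every `q ∈ Q ∪ {r}` there is a fresh copy `q̂`
(`Sum.inr (Sum.inl q)` for `q ∈ Q`, and `Sum.inr (Sum.inr ())` for `r̂`),
and every letter sends `q̂` to `q`. -/
def extDelta2 {Q A : Type*} (δ : Q → A → Option Q) (t : Q) :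
    (Q ⊕ Bool) ⊕ (Q ⊕ Unit) → A → (Q ⊕ Bool) ⊕ (Q ⊕ Unit) :=
  fun s a =>
    match s with
    | Sum.inl b => Sum.inl (extDelta δ t b a)
    | Sum.inr (Sum.inl q) => Sum.inl (Sum.inl q)
    | Sum.inr (Sum.inr _) => Sum.inl (Sum.inr true)

/-!
The only way into `r` is from `r̂`, which is never entered, so every nonempty word visits `r` for
the last time at position `1`. Hence `(q⊖, r)` is related by `a w` exactly when `q⊖` is avoided from
position `1` on. The letter `a` maps the hatted states onto `Q ∪ {r}`, so this avoidance forces `w`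
to be defined on all of `Q`; conversely, when `a` is defined on all of `Q`, the image of `Q''` under
`a` is exactly `Q ∪ {r}`, and there `r` behaves like `t`. A nonempty carefully synchronizing word
`w` with first letter `a` therefore yields the word `a w` for `A''`, and every suitable word for
`A''` becomes carefully synchronizing once its first letter is dropped.
-/

/-- The state set `Q''` of `extDelta2`. -/
abbrev ExtState (Q : Type*) := (Q ⊕ Bool) ⊕ (Q ⊕ Unit)

namespace ExtState

variable {Q : Type*}

/-- A state of the partial DFA, seen as a state of `A''`. -/
abbrev orig (q : Q) : ExtState Q := Sum.inl (Sum.inl q)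

/-- The state `q⊖`, which records that an undefined transition was taken. -/
abbrev sink : ExtState Q := Sum.inl (Sum.inr false)

/-- The state `r`, which is left by the same transitions as `t`. -/
abbrev r : ExtState Q := Sum.inl (Sum.inr true)

/-- The state `q̂` for `q ∈ Q`, from which every letter leads to `q`. -/
abbrev hat (q : Q) : ExtState Q := Sum.inr (Sum.inl q)

/-- The state `r̂`, from which every letter leads to `r`. -/
abbrev hatR : ExtState Q := Sum.inr (Sum.inr ())

end ExtState

open ExtState

section CompleteDFA

variable {Q A : Type*}

theorem dStar_cons (δ : Q → A → Q) (q : Q) (a : A) (w : List A) :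
    dStar δ q (a :: w) = dStar δ (δ q a) w := rfl

theorem dStar_append_singleton (δ : Q → A → Q) (q : Q) (w : List A) (a : A) :
    dStar δ q (w ++ [a]) = δ (dStar δ q w) a := by
  simp [dStar]

variable [Fintype Q] [DecidableEq Q]

theorem lastVisitSet_le_coe_iff {δ : Q → A → Q} {w : List A} {p : Q} {n : ℕ} :
    lastVisitSet δ w p ≤ n ↔ ∀ v, v <+: w → ∀ q, dStar δ q v = p → v.length ≤ n := by
  simp only [lastVisitSet, Finset.max_le_iff, Finset.mem_filter, Finset.mem_range,
    Nat.lt_succ_iff, Nat.cast_withBot, WithBot.coe_le_coe]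
  constructor
  · intro h v hv q hq
    exact h _ ⟨hv.length_le, q, by rwa [← List.prefix_iff_eq_take.1 hv]⟩
  · rintro h i ⟨hi, q, hq⟩
    simpa [hi] using h _ (List.take_prefix i w) q hq

theorem length_le_lastVisitSet (δ : Q → A → Q) {v w : List A} (hv : v <+: w) (q : Q) :
    (v.length : WithBot ℕ) ≤ lastVisitSet δ w (dStar δ q v) :=
  Finset.le_max (a := v.length) <| Finset.mem_filter.2
    ⟨Finset.mem_range_succ_iff.2 hv.length_le, q, by rw [← List.prefix_iff_eq_take.1 hv]⟩

theorem lastVisitSet_cons_lt_one_iff {δ : Q → A → Q} {a : A} {u : List A} {p : Q} :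
    lastVisitSet δ (a :: u) p < 1 ↔ ∀ q, ∀ v, v <+: u → dStar δ (δ q a) v ≠ p := by
  rw [Nat.WithBot.lt_one_iff_le_zero, ← Nat.cast_zero, lastVisitSet_le_coe_iff]
  constructor
  · intro h q v hv hp
    simpa using h (a :: v) (List.cons_prefix_cons.2 ⟨rfl, hv⟩) q hp
  · intro h v hv q hp
    rcases List.prefix_cons_iff.1 hv with rfl | ⟨v, rfl, hvu⟩
    · rfl
    · exact absurd hp (h q v hvu)

end CompleteDFA

section Completion

variable {Q A : Type*} {δ : Q → A → Option Q} {t q p : Q} {a : A} {u w : List A}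

theorem pStar_cons (δ : Q → A → Option Q) (q : Q) (a : A) (w : List A) :
    pStar δ q (a :: w) = (δ q a).bind fun p => pStar δ p w := by
  cases h : δ q a with
  | none => simpa [pStar, h] using List.foldl_fixed' (fun _ => rfl) w
  | some p => simp [pStar, h]

theorem extDelta2_orig_of_eq_some (h : δ q a = some p) :
    extDelta2 δ t (orig q) a = orig p := by
  simp [extDelta2, extDelta, h]

theorem extDelta2_orig_of_eq_none (h : δ q a = none) :
    extDelta2 δ t (orig q) a = sink := by
  simp [extDelta2, extDelta, h]

theorem dStar_extDelta2_orig_of_pStar_eq_some (h : pStar δ q w = some p) :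
    dStar (extDelta2 δ t) (orig q) w = orig p := by
  induction w generalizing q with
  | nil => exact congrArg orig (Option.some.inj h)
  | cons a w ih =>
    obtain ⟨q', hq', hp⟩ := Option.bind_eq_some_iff.1 (pStar_cons δ q a w ▸ h)
    rw [dStar_cons, extDelta2_orig_of_eq_some hq', ih hp]

theorem pStar_isSome_iff_forall_prefix_ne_sink (t : Q) :
    (pStar δ q w).isSome ↔ ∀ v, v <+: w → dStar (extDelta2 δ t) (orig q) v ≠ sink := by
  induction w generalizing q with
  | nil => simp [pStar, dStar]
  | cons a w ih =>
    have shift : (∀ v, v <+: a :: w → dStar (extDelta2 δ t) (orig q) v ≠ sink) ↔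
        ∀ v, v <+: w → dStar (extDelta2 δ t) (extDelta2 δ t (orig q) a) v ≠ sink := by
      constructor
      · exact fun h v hv => h (a :: v) (List.cons_prefix_cons.2 ⟨rfl, hv⟩)
      · intro h v hv
        rcases List.prefix_cons_iff.1 hv with rfl | ⟨v, rfl, hvw⟩
        · simp [dStar]
        · exact h v hvw
    rw [shift, pStar_cons]
    cases h : δ q a with
    | none =>
      rw [extDelta2_orig_of_eq_none h]
      simpa using ⟨[], List.nil_prefix, rfl⟩
    | some p => rw [extDelta2_orig_of_eq_some h, Option.bind_some, ih]

theorem dStar_extDelta2_r_of_ne_nil (hw : w ≠ []) :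
    dStar (extDelta2 δ t) r w = dStar (extDelta2 δ t) (orig t) w := by
  obtain ⟨a, w, rfl⟩ := List.exists_cons_of_ne_nil hw
  rfl

theorem range_extDelta2 (ha : ∀ q, (δ q a).isSome) :
    Set.range (fun s => extDelta2 δ t s a) = insert r (Set.range orig) := by
  have orig_mem (q : Q) : extDelta2 δ t (orig q) a ∈ insert r (Set.range orig) := by
    obtain ⟨p, hp⟩ := Option.isSome_iff_exists.1 (ha q)
    exact Or.inr ⟨p, (extDelta2_orig_of_eq_some hp).symm⟩
  apply Set.Subset.antisymm
  · rintro _ ⟨(q | _) | q | _, rfl⟩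
    · exact orig_mem q
    · exact orig_mem t
    · exact Or.inr ⟨q, rfl⟩
    · exact Or.inl rfl
  · rintro _ (rfl | ⟨q, rfl⟩)
    · exact ⟨hatR, rfl⟩
    · exact ⟨hat q, rfl⟩

theorem forall_extDelta2_iff (ha : ∀ q, (δ q a).isSome) (P : ExtState Q → Prop) :
    (∀ s, P (extDelta2 δ t s a)) ↔ P r ∧ ∀ q, P (orig q) := by
  rw [← Set.forall_mem_range (f := fun s => extDelta2 δ t s a), range_extDelta2 ha,
    Set.forall_mem_insert, Set.forall_mem_range]

theorem extDelta2_ne_hatR (s : ExtState Q) : extDelta2 δ t s a ≠ hatR := by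
  rcases s with _ | _ | _ <;> exact Sum.inl_ne_inr

theorem extDelta2_eq_r_iff {s : ExtState Q} : extDelta2 δ t s a = r ↔ s = hatR := by
  rcases s with (q | _) | _ | _
  · cases h : δ q a <;> simp [extDelta2, extDelta, h]
  · cases h : δ t a <;> simp [extDelta2, extDelta, h]
  · simp [extDelta2]
  · simp [extDelta2]

theorem length_le_one_of_dStar_extDelta2_eq_r {s : ExtState Q}
    (h : dStar (extDelta2 δ t) s w = r) : w.length ≤ 1 := by
  rcases w.eq_nil_or_concat' with rfl | ⟨v, b, rfl⟩
  · simp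
  rw [dStar_append_singleton, extDelta2_eq_r_iff] at h
  rcases v.eq_nil_or_concat' with rfl | ⟨v, c, rfl⟩
  · simp
  rw [dStar_append_singleton] at h
  exact absurd h (extDelta2_ne_hatR _)

theorem Synchronizes.ne_nil (h : Synchronizes (extDelta2 δ t) w) : w ≠ [] := by
  rintro rfl
  obtain ⟨s, hs⟩ := h
  simpa [dStar] using (hs sink).trans (hs r).symm

theorem CarefullySync.synchronizes_extDelta2_cons (h : CarefullySync δ u) (hu : u ≠ [])
    (ha : ∀ q, (δ q a).isSome) : Synchronizes (extDelta2 δ t) (a :: u) := by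
  obtain ⟨q₀, hq₀⟩ := h
  have orig_eq (q : Q) : dStar (extDelta2 δ t) (orig q) u = orig q₀ :=
    dStar_extDelta2_orig_of_pStar_eq_some (hq₀ q)
  refine ⟨orig q₀, (forall_extDelta2_iff ha (dStar (extDelta2 δ t) · u = orig q₀)).2
    ⟨?_, orig_eq⟩⟩
  rw [dStar_extDelta2_r_of_ne_nil hu, orig_eq]

theorem Synchronizes.carefullySync_of_cons (h : Synchronizes (extDelta2 δ t) (a :: u))
    (hu : ∀ q, (pStar δ q u).isSome) : CarefullySync δ u := by
  obtain ⟨s, hs⟩ := h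
  have eq_some (q : Q) : ∃ p, pStar δ q u = some p ∧ orig p = s := by
    obtain ⟨p, hp⟩ := Option.isSome_iff_exists.1 (hu q)
    exact ⟨p, hp, (dStar_extDelta2_orig_of_pStar_eq_some hp).symm.trans (hs (hat q))⟩
  obtain ⟨q₀, -, rfl⟩ := eq_some t
  refine ⟨q₀, fun q => ?_⟩
  obtain ⟨p, hp, hpq⟩ := eq_some q
  rwa [Sum.inl_injective.comp Sum.inl_injective hpq] at hp

theorem CarefullySync.ne_nil [Nontrivial Q] (h : CarefullySync δ w) : w ≠ [] := by
  rintro rfl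
  obtain ⟨q₀, hq₀⟩ := h
  obtain ⟨q, hq⟩ := exists_ne q₀
  exact hq (Option.some.inj (hq₀ q))

theorem CarefullySync.pStar_isSome (h : CarefullySync δ w) (q : Q) : (pStar δ q w).isSome := by
  obtain ⟨q₀, hq₀⟩ := h
  simp [hq₀ q]

theorem isSome_of_isSome_pStar_cons (h : (pStar δ q (a :: w)).isSome) : (δ q a).isSome :=
  Option.isSome_of_isSome_bind (pStar_cons δ q a w ▸ h)

variable [Fintype Q] [DecidableEq Q]

theorem lastVisitSet_extDelta2_cons_r : lastVisitSet (extDelta2 δ t) (a :: u) r = 1 := by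
  apply le_antisymm
  · exact lastVisitSet_le_coe_iff.2 fun _ _ _ => length_le_one_of_dStar_extDelta2_eq_r
  · exact length_le_lastVisitSet (extDelta2 δ t) (v := [a]) (by simp) hatR

theorem mem_relLtLtSets_extDelta2_cons_iff :
    (sink, r) ∈ RelLtLtSets (extDelta2 δ t) (a :: u) ↔
      (∀ q, (δ q a).isSome) ∧ ∀ q, (pStar δ q u).isSome := by
  have mem_iff : (sink, r) ∈ RelLtLtSets (extDelta2 δ t) (a :: u) ↔
      ∀ s, ∀ v, v <+: u → dStar (extDelta2 δ t) (extDelta2 δ t s a) v ≠ sink := by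
    rw [← lastVisitSet_cons_lt_one_iff]
    simp [RelLtLtSets, lastVisitSet_extDelta2_cons_r]
  rw [mem_iff]
  constructor
  · refine fun h => ⟨fun q => ?_, fun q =>
      (pStar_isSome_iff_forall_prefix_ne_sink t).2 (h (hat q))⟩
    rw [Option.isSome_iff_ne_none]
    exact fun hq => h (orig q) [] List.nil_prefix (extDelta2_orig_of_eq_none hq)
  · rintro ⟨ha, hu⟩
    have orig_ne (q : Q) : ∀ v, v <+: u → dStar (extDelta2 δ t) (orig q) v ≠ sink :=
      (pStar_isSome_iff_forall_prefix_ne_sink t).1 (hu q)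
    refine (forall_extDelta2_iff ha
      (fun s => ∀ v, v <+: u → dStar (extDelta2 δ t) s v ≠ sink)).2 ⟨fun v hv => ?_, orig_ne⟩
    rcases eq_or_ne v [] with rfl | hv₀
    · simp [dStar]
    · rw [dStar_extDelta2_r_of_ne_nil hv₀]
      exact orig_ne t v hv

end Completion

theorem carefullySync_iff_sync_relLtLtSets {Q A : Type*} [Fintype Q]
    [DecidableEq Q] (hQ : 2 ≤ Fintype.card Q)
    (δ : Q → A → Option Q) (t : Q) :
    (∃ w : List A, CarefullySync δ w) ↔
      ∃ w : List A, Synchronizes (extDelta2 δ t) w ∧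
        ((Sum.inl (Sum.inr false), Sum.inl (Sum.inr true)) :
            ((Q ⊕ Bool) ⊕ (Q ⊕ Unit)) × ((Q ⊕ Bool) ⊕ (Q ⊕ Unit))) ∈
          RelLtLtSets (extDelta2 δ t) w := by
  constructor
  · rintro ⟨w, hw⟩
    have : Nontrivial Q := Fintype.one_lt_card_iff_nontrivial.1 hQ
    obtain ⟨a, u, rfl⟩ := List.exists_cons_of_ne_nil hw.ne_nil
    have ha (q : Q) : (δ q a).isSome := isSome_of_isSome_pStar_cons (hw.pStar_isSome q)
    exact ⟨a :: a :: u, hw.synchronizes_extDelta2_cons (List.cons_ne_nil a u) ha,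
      mem_relLtLtSets_extDelta2_cons_iff.2 ⟨ha, hw.pStar_isSome⟩⟩
  · rintro ⟨w, hsync, hrel⟩
    obtain ⟨a, u, rfl⟩ := List.exists_cons_of_ne_nil hsync.ne_nil
    exact ⟨u, hsync.carefullySync_of_cons (mem_relLtLtSets_extDelta2_cons_iff.1 hrel).2⟩
end
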